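/- Let p_1,…,p_m ∈ ℕ with each p_i ≥ 2 and Σ_{i=1}^m 1/p_i < m−1. Then the proportion of homomorphisms ρ : Γ_{p_1,…,p_m} → S_n that factor through Φ_{p_1,…,p_m} (equivalently, satisfy L_{p_1,…,p_m} ⊆ ker ρ) among all homomorphisms Γ_{p_1,…,p_m} → S_n tends to 1 as n → ∞; that is, |{ρ ∈ Hom(Γ_{p_1,…,p_m}, S_n) : ρ factors through Φ_{p_1,…,p_m}}| / h_n(Γ_{p_1,…,p_m}) → 1. -/

import Mathlib

open Filter Topology Asymptotics
open scoped TensorProduct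

/-- the relations `x_i ^ p_i = x_j ^ p_j` defining `Γ_{p_1,…,p_m}` -/
def torusRels (m : ℕ) (p : Fin m → ℕ) : Set (FreeGroup (Fin m)) :=
  {w : FreeGroup (Fin m) | ∃ i j : Fin m, w = FreeGroup.of i ^ p i * (FreeGroup.of j ^ p j)⁻¹}

/-- the group `Γ_{p_1,…,p_m} = ⟨x_1,…,x_m ∣ x_1^{p_1} = ⋯ = x_m^{p_m}⟩` -/
abbrev TorusKnotGroup (m : ℕ) (p : Fin m → ℕ) : Type :=
  PresentedGroup (torusRels m p)

/-- the relations `x_i ^ p_i = 1` defining `C_{p_1} * ⋯ * C_{p_m}` -/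
def cyclicRels (m : ℕ) (p : Fin m → ℕ) : Set (FreeGroup (Fin m)) :=
  {w : FreeGroup (Fin m) | ∃ i : Fin m, w = FreeGroup.of i ^ p i}

/-- the free product `C_{p_1} * ⋯ * C_{p_m}` of cyclic groups of orders `p_1, …, p_m`,
presented as `⟨x_1,…,x_m ∣ x_1^{p_1} = ⋯ = x_m^{p_m} = 1⟩`. -/
abbrev CyclicFreeProduct (m : ℕ) (p : Fin m → ℕ) : Type :=
  PresentedGroup (cyclicRels m p)

theorem cyclicFreeProduct_gen_pow (m : ℕ) (p : Fin m → ℕ) (i : Fin m) :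
    (PresentedGroup.of (rels := cyclicRels m p) i) ^ p i = 1 := by
  have : PresentedGroup.mk (cyclicRels m p) (FreeGroup.of i ^ p i) = 1 := by
    apply (QuotientGroup.eq_one_iff _).mpr
    exact Subgroup.subset_normalClosure ⟨i, rfl⟩
  rw [map_pow] at this
  exact this

/-- the projection `Φ_{p_1,…,p_m} : Γ_{p_1,…,p_m} → C_{p_1} * ⋯ * C_{p_m}`,
sending each generator `x_j` to the fixed generator of `C_{p_j}`;
its kernel is `L_{p_1,…,p_m}`. -/
noncomputable def PhiMap (m : ℕ) (p : Fin m → ℕ) :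
    TorusKnotGroup m p →* CyclicFreeProduct m p :=
  PresentedGroup.toGroup (f := fun i => PresentedGroup.of i) (by
    rintro w ⟨i, j, rfl⟩
    simp only [map_mul, map_pow, map_inv, FreeGroup.lift_apply_of]
    rw [cyclicFreeProduct_gen_pow, cyclicFreeProduct_gen_pow]
    simp)

/-! Write `r_p(c)` for the number of `p`-th roots of `c`. The homomorphisms `Γ → S_n` sending the
common power `x_i ^ p_i` to `c` number `∏ i, r_{p_i}(c)`, and those factoring through `Φ` are the
ones with `c = 1`; so the claim is that `∑_{c ≠ 1} ∏ i, r_{p_i}(c)` is negligible against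
`∏ i, r_{p_i}(1)`.

Let `c` move exactly the points of a set `s` of size `k`. A `p`-th root of `c` restricts to a root
of `1` off `s` and to a root of a derangement `d` on `s`.

* Off `s`, there are at most `(p + 2)^k r_p(1) / (n (n - 1) ⋯ (n - k + 1))^(1 - 1/p)` roots, because
  a `p`-th root of `1` in `S_n` has `O(n^(1/p))` fixed points on average: multiplying it by a
  `p`-cycle on its fixed points gives another root, and the cycle can be recovered from one point.
* On `s`, a root of `d` is determined, up to `2^k` choices, by the permutation it induces on the
  `q ≤ k / 2` cycles of `d`. This is a `p`-th root of `1`, hence has at least `q / p` cycles, and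
  `∑_{σ ∈ S_q} q^(number of cycles of σ) ≤ q! 4^q` leaves at most `4^q q^(q (1 - 1/p))` of those.

With `δ = ∑ i, (1 - 1/p_i) - 1 > 0`, the permutations moving `k` points thus contribute at most a
proportion `(C n^(-δ/2))^k`, and the geometric series tends to `0`.
-/

open Equiv Equiv.Perm Finset
open scoped Nat

section Cycles

variable {β : Type*}

/-- The cycles of a permutation, fixed points included, encoded as the quotient of the underlying
type by the relation of lying in the same cycle. -/
abbrev Cycles (c : Perm β) : Type _ := Quotient (SameCycle.setoid c)

theorem Cycles.mk_apply (c : Perm β) (b : β) : (⟦c b⟧ : Cycles c) = ⟦b⟧ :=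
  Quotient.sound (sameCycle_apply_left.mpr (SameCycle.refl c b))

theorem Cycles.exists_zpow_out (c : Perm β) (b : β) : ∃ i : ℤ, (c ^ i) (⟦b⟧ : Cycles c).out = b :=
  Quotient.mk_out (s := SameCycle.setoid c) b

attribute [local instance] arrowAction

theorem mem_fixedBy_iff_sameCycle_le_ker {X : Type*} (σ : Perm β) (f : β → X) :
    f ∈ MulAction.fixedBy (β → X) σ ↔ SameCycle.setoid σ ≤ Setoid.ker f := by
  constructor
  · rintro hf a _ ⟨i, rfl⟩
    have hfix : σ ^ (-i) • f = f :=
      zpow_mem (show σ ∈ MulAction.stabilizer (Perm β) f from hf) (-i)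
    change f a = f ((σ ^ i) a)
    conv_lhs => rw [← hfix]
    change f ((σ ^ (-i))⁻¹ a) = _
    rw [zpow_neg, inv_inv]
  · intro hf
    funext a
    exact hf ⟨1, by simp⟩

theorem orbitRel_arrow_iff_map_univ_eq [Fintype β] {X : Type*} (f g : β → X) :
    MulAction.orbitRel (Perm β) (β → X) f g ↔
      (univ : Finset β).val.map f = (univ : Finset β).val.map g := by
  classical
  constructor
  · rintro ⟨σ, rfl⟩
    conv_rhs => rw [← Multiset.map_univ_val_equiv σ⁻¹, Multiset.map_map]
    rfl
  · intro h
    have hfiber (i : X) : Nonempty ({a // g a = i} ≃ {a // f a = i}) := by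
      refine ⟨Fintype.equivOfCardEq ?_⟩
      have hcount := congrArg (Multiset.count i) h
      simp only [Multiset.count_map, eq_comm (a := i)] at hcount
      simpa [Fintype.card_subtype, Finset.card_def] using hcount.symm
    let e := fun i => (hfiber i).some
    let σ : Perm β := (sigmaFiberEquiv g).symm.trans ((sigmaCongrRight e).trans (sigmaFiberEquiv f))
    have hσ (a : β) : f (σ a) = g a := (e (g a) ⟨a, rfl⟩).2
    refine ⟨σ, funext fun b => ?_⟩
    change g (σ⁻¹ b) = f b
    rw [← hσ, ← Perm.mul_apply, mul_inv_cancel, Perm.one_apply]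

theorem card_orbitRel_arrow [Fintype β] (X : Type*) [Finite X] :
    Nat.card (MulAction.orbitRel.Quotient (Perm β) (β → X)) =
      (Nat.card X + Fintype.card β - 1).choose (Fintype.card β) := by
  classical
  have := Fintype.ofFinite X
  let content (f : β → X) : Sym X (Fintype.card β) := ⟨(univ : Finset β).val.map f, by simp⟩
  have hcontent (f g : β → X) : content f = content g ↔ MulAction.orbitRel (Perm β) (β → X) f g :=
    Subtype.ext_iff.trans (orbitRel_arrow_iff_map_univ_eq f g).symm
  rw [Nat.card_eq_fintype_card (α := X), ← Sym.card_sym_eq_choose, ← Nat.card_eq_fintype_card]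
  refine Nat.card_eq_of_bijective
    (Quotient.lift content fun f g h => (hcontent f g).mpr h) ⟨?_, ?_⟩
  · rintro ⟨f⟩ ⟨g⟩ h
    exact Quotient.sound ((hcontent f g).mp h)
  · rintro ⟨s, hs⟩
    let e : β ≃ Fin s.toList.length := Fintype.equivOfCardEq (by simp [hs])
    refine ⟨⟦fun b => s.toList.get (e b)⟧, Subtype.ext ?_⟩
    change (univ : Finset β).val.map (s.toList.get ∘ e) = s
    rw [← Multiset.map_map, Multiset.map_univ_val_equiv, Fin.univ_val_map, List.ofFn_get,
      Multiset.coe_toList]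

theorem sum_pow_card_cycles [Fintype β] [DecidableEq β] (X : ℕ) :
    ∑ σ : Perm β, X ^ Nat.card (Cycles σ) = X.ascFactorial (Fintype.card β) := by
  classical
  have hfixed (σ : Perm β) :
      X ^ Nat.card (Cycles σ) = Fintype.card (MulAction.fixedBy (β → Fin X) σ) := by
    rw [← Nat.card_eq_fintype_card, Nat.card_congr ((Equiv.subtypeEquivRight
      (mem_fixedBy_iff_sameCycle_le_ker σ)).trans (Setoid.liftEquiv _)), Nat.card_fun]
    simp
  rw [Finset.sum_congr rfl fun σ _ => hfixed σ,
    MulAction.sum_card_fixedBy_eq_card_orbits_mul_card_group, ← Nat.card_eq_fintype_card]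
  change Nat.card (MulAction.orbitRel.Quotient (Perm β) (β → Fin X)) * _ = _
  rw [card_orbitRel_arrow, Fintype.card_perm, Nat.ascFactorial_eq_factorial_mul_choose',
    Nat.card_fin, mul_comm]

theorem sum_card_pow_card_cycles_le (β : Type*) [Fintype β] [DecidableEq β] :
    ∑ σ : Perm β, Fintype.card β ^ Nat.card (Cycles σ) ≤
      (Fintype.card β)! * 4 ^ Fintype.card β := by
  rw [sum_pow_card_cycles, Nat.ascFactorial_eq_factorial_mul_choose']
  gcongr
  calc (Fintype.card β + Fintype.card β - 1).choose (Fintype.card β)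
      ≤ 2 ^ (Fintype.card β + Fintype.card β - 1) := Nat.choose_le_two_pow _ _
    _ ≤ 2 ^ (2 * Fintype.card β) := Nat.pow_le_pow_right two_pos (by omega)
    _ = 4 ^ Fintype.card β := by rw [pow_mul]; norm_num

theorem card_le_mul_card_cycles [Finite β] {p : ℕ} (hp : p ≠ 0) {x : Perm β} (hx : x ^ p = 1) :
    Nat.card β ≤ p * Nat.card (Cycles x) := by
  rw [show p * Nat.card (Cycles x) = Nat.card (Fin p × Cycles x) by simp]
  refine Nat.card_le_card_of_surjective (fun z => (x ^ (z.1 : ℕ)) z.2.out) fun b => ?_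
  obtain ⟨i, hi⟩ := Cycles.exists_zpow_out x b
  obtain ⟨k, hk, hki⟩ : ∃ k < p, x ^ k = x ^ i := by
    classical
    have hfin : IsOfFinOrder x := isOfFinOrder_iff_pow_eq_one.mpr ⟨p, Nat.pos_of_ne_zero hp, hx⟩
    obtain ⟨k, hk, hki⟩ := Finset.mem_image.mp
      (hfin.mem_zpowers_iff_mem_range_orderOf.mp (⟨i, rfl⟩ : x ^ i ∈ Subgroup.zpowers x))
    exact ⟨k, (Finset.mem_range.mp hk).trans_le
      (orderOf_le_of_pow_eq_one (Nat.pos_of_ne_zero hp) hx), hki⟩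
  exact ⟨(⟨k, hk⟩, ⟦b⟧), by simp only [hki, hi]⟩

theorem two_mul_card_cycles_le [Finite β] {c : Perm β} (hc : c ∈ derangements β) :
    2 * Nat.card (Cycles c) ≤ Nat.card β := by
  have hne (o o' : Cycles c) : o.out ≠ c o'.out := by
    intro h
    have ho : o = o' := by
      rw [← o.out_eq, h, Cycles.mk_apply, o'.out_eq]
    exact hc _ (ho ▸ h).symm
  rw [two_mul, ← Nat.card_sum]
  refine Nat.card_le_card_of_injective (Sum.elim Quotient.out (c ∘ Quotient.out)) ?_
  exact Quotient.out_injective.sumElim (c.injective.comp Quotient.out_injective) hne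

end Cycles

section Roots

/-- The number of `p`-th roots of an element of a group. -/
noncomputable def rootCount {G : Type*} [Group G] (p : ℕ) (c : G) : ℕ :=
  Nat.card {x : G // x ^ p = c}

theorem rootCount_one_pos {G : Type*} [Group G] [Finite G] (p : ℕ) : 0 < rootCount p (1 : G) :=
  Nat.card_pos_iff.mpr ⟨⟨1, one_pow p⟩, inferInstance⟩

theorem rootCount_map_mulEquiv {G H : Type*} [Group G] [Group H] (e : G ≃* H) (p : ℕ) (c : G) :
    rootCount p (e c) = rootCount p c :=
  (Nat.card_congr (e.toEquiv.subtypeEquiv fun x => by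
    change x ^ p = c ↔ e x ^ p = e c
    rw [← map_pow, e.injective.eq_iff])).symm

theorem rootCount_one_congr {α β : Type*} (e : α ≃ β) (p : ℕ) :
    rootCount p (1 : Perm α) = rootCount p (1 : Perm β) := by
  rw [← rootCount_map_mulEquiv e.permCongrHom p 1, map_one]

theorem mem_centralizer_of_pow_eq {G : Type*} [Group G] {x c : G} {p : ℕ} (h : x ^ p = c) :
    x ∈ Subgroup.centralizer {c} :=
  Subgroup.mem_centralizer_singleton_iff.mpr (h ▸ (Commute.self_pow x p).eq)

variable {β : Type*} {c : Perm β}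

theorem zpow_apply_comm_of_mem_centralizer {x : Perm β} (hx : x ∈ Subgroup.centralizer {c})
    (i : ℤ) (a : β) : (c ^ i) (x a) = x ((c ^ i) a) := by
  have hcomm : Commute x c := Subgroup.mem_centralizer_singleton_iff.mp hx
  exact (DFunLike.congr_fun (hcomm.zpow_right i).eq a).symm

theorem sameCycle_iff_of_mem_centralizer {x : Perm β} (hx : x ∈ Subgroup.centralizer {c})
    (a b : β) : c.SameCycle a b ↔ c.SameCycle (x a) (x b) :=
  exists_congr fun i => by
    rw [zpow_apply_comm_of_mem_centralizer hx, x.injective.eq_iff]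

/-- The permutation that an element of the centralizer of `c` induces on the cycles of `c`. -/
def permCycles (c : Perm β) : Subgroup.centralizer {c} →* Perm (Cycles c) where
  toFun x := Quotient.congr x.1 (sameCycle_iff_of_mem_centralizer x.2)
  map_one' := Equiv.ext (Quotient.ind fun _ => rfl)
  map_mul' _ _ := Equiv.ext (Quotient.ind fun _ => rfl)

theorem permCycles_mk (x : Subgroup.centralizer {c}) (b : β) :
    permCycles c x ⟦b⟧ = ⟦x.1 b⟧ :=
  rfl

theorem permCycles_pow_eq_one {x : Subgroup.centralizer {c}} {p : ℕ} (h : x.1 ^ p = c) :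
    permCycles c x ^ p = 1 := by
  rw [← map_pow]
  refine Equiv.ext (Quotient.ind fun b => ?_)
  rw [permCycles_mk, Subgroup.coe_pow, h, Cycles.mk_apply, Perm.one_apply]

theorem eq_of_permCycles_eq_of_range_out_eq {x y : Subgroup.centralizer {c}}
    (hperm : permCycles c x = permCycles c y)
    (hrange : Set.range (fun o : Cycles c => x.1 o.out) =
      Set.range fun o : Cycles c => y.1 o.out) : x = y := by
  have hout (o : Cycles c) : x.1 o.out = y.1 o.out := by
    obtain ⟨o', ho'⟩ : ∃ o' : Cycles c, y.1 o'.out = x.1 o.out :=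
      hrange.subset (Set.mem_range_self o)
    have ho : permCycles c y o' = permCycles c y o := by
      rw [← o'.out_eq, permCycles_mk, ho', ← permCycles_mk, o.out_eq, hperm]
    rw [← ho', (permCycles c y).injective ho]
  ext b
  obtain ⟨i, hi⟩ := Cycles.exists_zpow_out c b
  rw [← hi, ← zpow_apply_comm_of_mem_centralizer x.2, hout,
    zpow_apply_comm_of_mem_centralizer y.2]

theorem rootCount_le_rootCount_cycles_mul [Finite β] (p : ℕ) (c : Perm β) :
    rootCount p c ≤ rootCount p (1 : Perm (Cycles c)) * 2 ^ Nat.card β := by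
  have := Fintype.ofFinite β
  rw [Nat.card_eq_fintype_card, ← Fintype.card_set, ← Nat.card_eq_fintype_card, rootCount,
    rootCount, ← Nat.card_prod]
  let toCentralizer (x : {x : Perm β // x ^ p = c}) : Subgroup.centralizer {c} :=
    ⟨x.1, mem_centralizer_of_pow_eq x.2⟩
  refine Nat.card_le_card_of_injective (fun x =>
    (⟨permCycles c (toCentralizer x), permCycles_pow_eq_one x.2⟩,
      Set.range fun o : Cycles c => x.1 o.out)) fun x y h => ?_
  obtain ⟨hperm, hrange⟩ := Prod.ext_iff.mp h
  have hxy : toCentralizer x = toCentralizer y :=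
    eq_of_permCycles_eq_of_range_out_eq (Subtype.ext_iff.mp hperm) hrange
  exact Subtype.ext (congrArg Subtype.val hxy :)

theorem rootCount_eq_card_filter {G : Type*} [Group G] [Fintype G] [DecidableEq G] (p : ℕ) (c : G) :
    rootCount p c = #{x : G | x ^ p = c} := by
  rw [rootCount, Nat.card_eq_fintype_card, Fintype.card_subtype]

-- Each `x` with `x ^ p = 1` contributes at least `k ^ (k / p)` to `sum_card_pow_card_cycles_le`.
theorem rootCount_one_mul_rpow_le [Fintype β] [Nonempty β] {p : ℕ} (hp : p ≠ 0) :
    (rootCount p (1 : Perm β) : ℝ) * (Fintype.card β : ℝ) ^ (Fintype.card β / p : ℝ) ≤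
      (Fintype.card β)! * 4 ^ Fintype.card β := by
  classical
  have hcycles (x : Perm β) (hx : x ^ p = 1) :
      (Fintype.card β : ℝ) ^ (Fintype.card β / p : ℝ) ≤
        (Fintype.card β : ℝ) ^ Nat.card (Cycles x) := by
    rw [← Real.rpow_natCast]
    refine Real.rpow_le_rpow_of_exponent_le (Nat.one_le_cast.mpr Fintype.card_pos) ?_
    rw [div_le_iff₀' (by positivity), ← Nat.card_eq_fintype_card]
    exact_mod_cast card_le_mul_card_cycles hp hx
  calc (rootCount p (1 : Perm β) : ℝ) * (Fintype.card β : ℝ) ^ (Fintype.card β / p : ℝ)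
      ≤ ∑ x : Perm β with x ^ p = 1, (Fintype.card β : ℝ) ^ Nat.card (Cycles x) := by
        rw [rootCount_eq_card_filter, ← nsmul_eq_mul]
        exact Finset.card_nsmul_le_sum _ _ _ fun x hx => hcycles x (mem_filter_univ x |>.mp hx)
    _ ≤ ∑ x : Perm β, (Fintype.card β : ℝ) ^ Nat.card (Cycles x) :=
        Finset.sum_le_univ_sum_of_nonneg fun x => by positivity
    _ ≤ (Fintype.card β)! * 4 ^ Fintype.card β := by
        exact_mod_cast sum_card_pow_card_cycles_le β

theorem rootCount_one_le [Finite β] {p : ℕ} (hp : p ≠ 0) :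
    (rootCount p (1 : Perm β) : ℝ) ≤
      4 ^ Nat.card β * (Nat.card β : ℝ) ^ (Nat.card β * (1 - 1 / p : ℝ)) := by
  have := Fintype.ofFinite β
  rcases isEmpty_or_nonempty β with hβ | hβ
  · have : rootCount p (1 : Perm β) ≤ 1 := by
      rw [rootCount, Finite.card_le_one_iff_subsingleton]
      infer_instance
    simpa using this
  rw [Nat.card_eq_fintype_card]
  have hk0 : (0 : ℝ) < Fintype.card β := Nat.cast_pos.mpr Fintype.card_pos
  rw [mul_sub, mul_one, mul_one_div, Real.rpow_sub hk0, Real.rpow_natCast, ← mul_div_assoc,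
    le_div_iff₀ (by positivity)]
  refine (rootCount_one_mul_rpow_le hp).trans ?_
  rw [mul_comm]
  gcongr
  exact_mod_cast Nat.factorial_le_pow _

end Roots

section Growth

variable {α : Type*}

theorem sum_rootCount_one_ne_le [Fintype α] [DecidableEq α] (p : ℕ) :
    ∑ a : α, rootCount p (1 : Perm {b // b ≠ a}) ≤
      ∑ x : {x : Perm α // x ^ p = 1}, Nat.card (Function.fixedPoints x.1) := by
  simp only [rootCount, ← Nat.card_sigma]
  refine Nat.card_le_card_of_injective
    (fun z => ⟨⟨ofSubtype z.2.1, by rw [← map_pow, z.2.2, map_one]⟩,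
      z.1, ofSubtype_apply_of_not_mem _ (by simp)⟩) ?_
  rintro ⟨a, y⟩ ⟨b, z⟩ h
  obtain rfl : a = b := congrArg (fun w => w.2.1) h
  have hyz : ofSubtype y.1 = ofSubtype z.1 := congrArg (fun w => w.1.1) h
  rw [Subtype.ext (ofSubtype_injective hyz)]

section CycleOn

variable {p : ℕ}

/-- The `p`-cycle `e 0 ↦ e 1 ↦ ⋯ ↦ e (p - 1) ↦ e 0`. -/
noncomputable def cycleOn (e : ZMod p ↪ α) : Perm α :=
  viaEmbeddingHom e (Equiv.addRight 1)

theorem cycleOn_apply (e : ZMod p ↪ α) (i : ZMod p) : cycleOn e (e i) = e (i + 1) :=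
  viaEmbedding_apply _ e i

theorem cycleOn_pow (e : ZMod p ↪ α) : cycleOn e ^ p = 1 := by
  have hrotate : (Equiv.addRight (1 : ZMod p)) ^ p = 1 := by
    ext i
    simp
  rw [cycleOn, ← map_pow, hrotate, map_one]

variable {e e' : ZMod p ↪ α} {x x' : Perm α}

theorem commute_cycleOn (hx : ∀ i, x (e i) = e i) : Commute x (cycleOn e) := by
  refine Disjoint.commute fun a => ?_
  by_cases ha : a ∈ Set.range e
  · obtain ⟨i, rfl⟩ := ha
    exact Or.inl (hx i)
  · exact Or.inr (viaEmbedding_apply_of_notMem _ e a ha)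

theorem mul_cycleOn_pow_apply_zero (hx : ∀ i, x (e i) = e i) (k : ℕ) :
    ((x * cycleOn e) ^ k) (e 0) = e k := by
  induction k with
  | zero => simp
  | succ k ih =>
    rw [pow_succ', Perm.mul_apply, ih, Perm.mul_apply, cycleOn_apply, hx, Nat.cast_succ]

theorem eq_of_mul_cycleOn_eq [NeZero p] (hx : ∀ i, x (e i) = e i) (hx' : ∀ i, x' (e' i) = e' i)
    (hmul : x * cycleOn e = x' * cycleOn e') (hzero : e 0 = e' 0) : x = x' ∧ e = e' := by
  have he : e = e' := by
    ext i
    rw [← ZMod.natCast_zmod_val i, ← mul_cycleOn_pow_apply_zero hx, hmul, hzero,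
      mul_cycleOn_pow_apply_zero hx']
  subst he
  exact ⟨mul_right_cancel hmul, rfl⟩

end CycleOn

theorem sum_descFactorial_card_fixedPoints_le [Fintype α] [DecidableEq α] {p : ℕ} (hp : p ≠ 0) :
    ∑ x : {x : Perm α // x ^ p = 1}, (Nat.card (Function.fixedPoints x.1)).descFactorial p ≤
      rootCount p (1 : Perm α) * Nat.card α := by
  classical
  have : NeZero p := ⟨hp⟩
  have hcard (x : {x : Perm α // x ^ p = 1}) :
      (Nat.card (Function.fixedPoints x.1)).descFactorial p =
        Nat.card (ZMod p ↪ Function.fixedPoints x.1) := by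
    rw [Nat.card_eq_fintype_card, Nat.card_eq_fintype_card, Fintype.card_embedding_eq, ZMod.card]
  simp only [hcard]
  rw [rootCount, ← Nat.card_sigma, ← Nat.card_prod]
  let points (z : Σ x : {x : Perm α // x ^ p = 1}, ZMod p ↪ Function.fixedPoints x.1) :
      ZMod p ↪ α := z.2.trans (Function.Embedding.subtype _)
  have hfix (z) (i : ZMod p) : z.1.1 (points z i) = points z i := (z.2 i).2
  refine Nat.card_le_card_of_injective (fun z =>
    (⟨z.1.1 * cycleOn (points z), ?_⟩, points z 0)) fun z w h => ?_
  · rw [(commute_cycleOn (hfix z)).mul_pow, z.1.2, cycleOn_pow, one_mul]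
  · obtain ⟨hmul, hzero⟩ := Prod.ext_iff.mp h
    obtain ⟨hperm, hpoints⟩ :=
      eq_of_mul_cycleOn_eq (hfix z) (hfix w) (Subtype.ext_iff.mp hmul) hzero
    obtain ⟨x, e⟩ := z
    obtain ⟨x', e'⟩ := w
    obtain rfl : x = x' := Subtype.ext hperm
    congr 1
    ext i
    exact DFunLike.congr_fun hpoints i

theorem le_add_descFactorial_div_pow (f : ℕ) {p : ℕ} (hp : p ≠ 0) {l : ℝ} (hl : 0 < l) :
    (f : ℝ) ≤ p + l + l * (f.descFactorial p / l ^ p) := by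
  rcases le_total (f : ℝ) (p + l) with hf | hf
  · exact hf.trans (le_add_of_nonneg_right (by positivity))
  have hpf : p ≤ f := by exact_mod_cast (le_add_of_nonneg_right hl.le).trans hf
  have hratio : 1 ≤ (f - p) / l := (one_le_div hl).mpr (by linarith)
  have hdesc : ((f : ℝ) - p) ^ p ≤ f.descFactorial p := by
    rw [← Nat.cast_sub hpf]
    exact_mod_cast (Nat.pow_le_pow_left (by omega) p).trans (Nat.pow_sub_le_descFactorial f p)
  have hdiv : (f - p) / l ≤ f.descFactorial p / l ^ p :=
    calc (f - p) / l ≤ ((f - p) / l) ^ p := le_self_pow₀ hratio hp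
      _ ≤ f.descFactorial p / l ^ p := by rw [div_pow]; gcongr
  rw [div_le_iff₀' hl] at hdiv
  linarith

theorem sum_card_fixedPoints_le [Fintype α] [DecidableEq α] {p : ℕ} (hp : p ≠ 0) {l : ℝ}
    (hl : 0 < l) :
    ∑ x : {x : Perm α // x ^ p = 1}, (Nat.card (Function.fixedPoints x.1) : ℝ) ≤
      rootCount p (1 : Perm α) * (p + l + l * (Nat.card α / l ^ p)) := calc
  _ ≤ ∑ x : {x : Perm α // x ^ p = 1},
      (p + l + l * ((Nat.card (Function.fixedPoints x.1)).descFactorial p / l ^ p)) :=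
    sum_le_sum fun x _ => le_add_descFactorial_div_pow _ hp hl
  _ = rootCount p (1 : Perm α) * (p + l) + l * ((∑ x : {x : Perm α // x ^ p = 1},
      (Nat.card (Function.fixedPoints x.1)).descFactorial p : ℕ) / l ^ p) := by
    rw [sum_add_distrib, ← mul_sum, ← sum_div, sum_const, card_univ, nsmul_eq_mul, rootCount,
      Nat.card_eq_fintype_card, Nat.cast_sum]
  _ ≤ rootCount p (1 : Perm α) * (p + l) +
      l * ((rootCount p (1 : Perm α) * Nat.card α : ℕ) / l ^ p) := by
    gcongr
    exact sum_descFactorial_card_fixedPoints_le hp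
  _ = rootCount p (1 : Perm α) * (p + l + l * (Nat.card α / l ^ p)) := by push_cast; ring

theorem rootCount_one_mul_rpow_le_succ {p : ℕ} (hp : p ≠ 0) (n : ℕ) :
    (rootCount p (1 : Perm (Fin n)) : ℝ) * ((n + 1 : ℕ) : ℝ) ^ (1 - 1 / p : ℝ) ≤
      (p + 2) * rootCount p (1 : Perm (Fin (n + 1))) := by
  -- the choice of `l` that balances the last two terms of `sum_card_fixedPoints_le`
  set l : ℝ := ((n + 1 : ℕ) : ℝ) ^ (1 / p : ℝ) with hl
  have hl1 : 1 ≤ l := Real.one_le_rpow (Nat.one_le_cast.mpr n.succ_pos) (by positivity)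
  have hlp : l ^ p = (n + 1 : ℕ) := by
    rw [hl, one_div, Real.rpow_inv_natCast_pow (by positivity) hp]
  have hfixed : (n + 1) * rootCount p (1 : Perm (Fin n)) ≤
      ∑ x : {x : Perm (Fin (n + 1)) // x ^ p = 1}, Nat.card (Function.fixedPoints x.1) := by
    have hcongr (a : Fin (n + 1)) :
        rootCount p (1 : Perm {b // b ≠ a}) = rootCount p (1 : Perm (Fin n)) :=
      rootCount_one_congr (Fintype.equivOfCardEq (by simp)) p
    simpa [hcongr] using sum_rootCount_one_ne_le (α := Fin (n + 1)) p
  have hmain : (n + 1 : ℕ) * (rootCount p (1 : Perm (Fin n)) : ℝ) ≤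
      rootCount p (1 : Perm (Fin (n + 1))) * ((p + 2) * l) := calc
    _ ≤ ∑ x : {x : Perm (Fin (n + 1)) // x ^ p = 1},
        (Nat.card (Function.fixedPoints x.1) : ℝ) := by exact_mod_cast hfixed
    _ ≤ rootCount p (1 : Perm (Fin (n + 1))) * (p + l + l) := by
      have hsum := sum_card_fixedPoints_le (α := Fin (n + 1)) hp (zero_lt_one.trans_le hl1)
      rwa [hlp, Nat.card_fin, div_self (by positivity), mul_one] at hsum
    _ ≤ rootCount p (1 : Perm (Fin (n + 1))) * (p * l + l + l) := by
      gcongr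
      exact le_mul_of_one_le_right (by positivity) hl1
    _ = rootCount p (1 : Perm (Fin (n + 1))) * ((p + 2) * l) := by ring
  rw [Real.rpow_sub (by positivity), Real.rpow_one, ← mul_div_assoc, div_le_iff₀ (by positivity)]
  linarith

theorem rootCount_one_mul_descFactorial_rpow_le {p : ℕ} (hp : p ≠ 0) (n k : ℕ) :
    (rootCount p (1 : Perm (Fin n)) : ℝ) * ((n + k).descFactorial k : ℝ) ^ (1 - 1 / p : ℝ) ≤
      (p + 2) ^ k * rootCount p (1 : Perm (Fin (n + k))) := by
  induction k with
  | zero => simp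
  | succ k ih =>
    rw [← add_assoc, Nat.succ_descFactorial_succ, Nat.cast_mul,
      Real.mul_rpow (by positivity) (by positivity)]
    calc _ = rootCount p (1 : Perm (Fin n)) * ((n + k).descFactorial k : ℝ) ^ (1 - 1 / p : ℝ) *
          ((n + k + 1 : ℕ) : ℝ) ^ (1 - 1 / p : ℝ) := by ring
      _ ≤ (p + 2) ^ k * (rootCount p (1 : Perm (Fin (n + k))) *
          ((n + k + 1 : ℕ) : ℝ) ^ (1 - 1 / p : ℝ)) := by rw [← mul_assoc]; gcongr
      _ ≤ (p + 2) ^ k * ((p + 2) * rootCount p (1 : Perm (Fin (n + k + 1)))) := by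
        gcongr ?_ * ?_
        exact rootCount_one_mul_rpow_le_succ hp (n + k)
      _ = (p + 2) ^ (k + 1) * rootCount p (1 : Perm (Fin (n + k + 1))) := by ring

end Growth

section Support

variable {α : Type*}

theorem ofSubtype_apply_ne_iff_of_mem_derangements {P : α → Prop} [DecidablePred P]
    {d : Perm (Subtype P)} (hd : d ∈ derangements (Subtype P)) (a : α) :
    ofSubtype d a ≠ a ↔ P a := by
  refine ⟨fun h => not_not.mp fun ha => h (ofSubtype_apply_of_not_mem d ha), fun ha h => ?_⟩
  rw [ofSubtype_apply_of_mem d ha] at h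
  exact hd ⟨a, ha⟩ (Subtype.ext h)

-- A root of `c` preserves the support of `c`, and is a `p`-th root of `1` outside of it.
theorem rootCount_ofSubtype_le [Finite α] {P : α → Prop} [DecidablePred P] (p : ℕ)
    {d : Perm (Subtype P)} (hd : d ∈ derangements (Subtype P)) :
    rootCount p (ofSubtype d) ≤ rootCount p (1 : Perm {a // ¬P a}) * rootCount p d := by
  have hmem (x : {x : Perm α // x ^ p = ofSubtype d}) (a : α) : P (x.1 a) ↔ P a := by
    have hcomm : ofSubtype d (x.1 a) = x.1 (ofSubtype d a) :=
      zpow_apply_comm_of_mem_centralizer (mem_centralizer_of_pow_eq x.2) 1 a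
    rw [← ofSubtype_apply_ne_iff_of_mem_derangements hd, hcomm, x.1.injective.ne_iff,
      ofSubtype_apply_ne_iff_of_mem_derangements hd]
  rw [rootCount, rootCount, rootCount, ← Nat.card_prod]
  refine Nat.card_le_card_of_injective (fun x =>
    (⟨x.1.subtypePerm fun a => not_congr (hmem x a), ?_⟩,
      ⟨x.1.subtypePerm (hmem x), ?_⟩)) fun x y h => Subtype.ext (Equiv.ext fun a => ?_)
  · ext a
    simp [x.2, ofSubtype_apply_of_not_mem d a.2]
  · ext a
    simp [x.2]
  · obtain ⟨hout, hin⟩ := Prod.ext_iff.mp h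
    by_cases ha : P a
    · exact congrArg (fun z => (z.1 ⟨a, ha⟩).1) hin
    · exact congrArg (fun z => (z.1 ⟨a, ha⟩).1) hout

theorem sum_derangements_eq_sum_support_eq [Fintype α] [DecidableEq α] {M : Type*}
    [AddCommMonoid M] (f : Perm α → M) (s : Finset α) :
    ∑ d : derangements s, f (ofSubtype d.1) = ∑ c with c.support = s, f c := by
  refine Finset.sum_bij (fun d _ => ofSubtype d.1) (fun d _ => ?_)
    (fun d _ d' _ h => Subtype.ext (ofSubtype_injective h)) (fun c hc => ?_) fun _ _ => rfl
  · simp only [mem_filter_univ, Finset.ext_iff, mem_support]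
    exact ofSubtype_apply_ne_iff_of_mem_derangements d.2
  · obtain rfl : c.support = s := (mem_filter_univ c).mp hc
    have hmem (a : α) : c a ∈ c.support ↔ a ∈ c.support := apply_mem_support
    refine ⟨⟨c.subtypePerm hmem, fun a ha => mem_support.mp a.2 (Subtype.ext_iff.mp ha)⟩,
      mem_univ _, ofSubtype_subtypePerm hmem fun a ha => mem_support.mpr ha⟩

theorem sum_ne_one_eq_sum_derangements [Fintype α] [DecidableEq α] {M : Type*} [AddCommMonoid M]
    (f : Perm α → M) :
    ∑ c with c ≠ 1, f c =
      ∑ s : Finset α with s.Nonempty, ∑ d : derangements s, f (ofSubtype d.1) := by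
  simp only [sum_derangements_eq_sum_support_eq]
  rw [← Finset.sum_fiberwise_of_maps_to (g := support) (t := {s | s.Nonempty})
    fun c hc => by simpa [Finset.nonempty_iff_ne_empty] using hc]
  refine Finset.sum_congr rfl fun s hs => ?_
  rw [Finset.filter_filter]
  refine Finset.sum_congr (Finset.filter_congr fun c _ => and_iff_right_of_imp ?_) fun _ _ => rfl
  rintro rfl rfl
  simp at hs

end Support

section DerangementSum

variable {ι : Type*} [Fintype ι] {p : ι → ℕ} {δ : ℝ} {β : Type*}

theorem rootCount_le_pow_mul_rpow_card_cycles [Finite β] {p : ℕ} (hp : p ≠ 0) (c : Perm β) :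
    (rootCount p c : ℝ) ≤
      8 ^ Nat.card β * (Nat.card β : ℝ) ^ (Nat.card (Cycles c) * (1 - 1 / p : ℝ)) := by
  have hp1 : 0 ≤ 1 - 1 / (p : ℝ) :=
    sub_nonneg.mpr (div_le_one_of_le₀ (Nat.one_le_cast.mpr (Nat.pos_of_ne_zero hp)) (by positivity))
  have hq : Nat.card (Cycles c) ≤ Nat.card β :=
    Nat.card_le_card_of_surjective _ Quotient.mk_surjective
  calc (rootCount p c : ℝ)
      ≤ rootCount p (1 : Perm (Cycles c)) * 2 ^ Nat.card β := by
        exact_mod_cast rootCount_le_rootCount_cycles_mul p c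
    _ ≤ 4 ^ Nat.card (Cycles c) *
        (Nat.card (Cycles c) : ℝ) ^ (Nat.card (Cycles c) * (1 - 1 / p : ℝ)) * 2 ^ Nat.card β := by
        gcongr
        exact rootCount_one_le hp
    _ ≤ 4 ^ Nat.card β *
        (Nat.card β : ℝ) ^ (Nat.card (Cycles c) * (1 - 1 / p : ℝ)) * 2 ^ Nat.card β := by
        gcongr
        norm_num
    _ = 8 ^ Nat.card β * (Nat.card β : ℝ) ^ (Nat.card (Cycles c) * (1 - 1 / p : ℝ)) := by
        rw [show (8 : ℝ) = 4 * 2 by norm_num, mul_pow]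
        ring

theorem prod_rootCount_le_of_mem_derangements [Fintype β] [Nonempty β] (hp : ∀ i, p i ≠ 0)
    (hδ : 0 ≤ δ) (hsum : ∑ i, (1 - 1 / p i : ℝ) = 1 + δ) {d : Perm β} (hd : d ∈ derangements β) :
    ∏ i, (rootCount (p i) d : ℝ) ≤
      (8 ^ Fintype.card ι) ^ Fintype.card β * (Fintype.card β : ℝ) ^ (Fintype.card β * (δ / 2)) *
        (Fintype.card β : ℝ) ^ Nat.card (Cycles d) := by
  have hcycles : 2 * (Nat.card (Cycles d) : ℝ) ≤ Fintype.card β := by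
    rw [← Nat.card_eq_fintype_card]
    exact_mod_cast two_mul_card_cycles_le hd
  have hk0 : (0 : ℝ) < Fintype.card β := Nat.cast_pos.mpr Fintype.card_pos
  have hk1 : (1 : ℝ) ≤ Fintype.card β := Nat.one_le_cast.mpr Fintype.card_pos
  calc ∏ i, (rootCount (p i) d : ℝ)
      ≤ ∏ i, (8 ^ Fintype.card β *
          (Fintype.card β : ℝ) ^ (Nat.card (Cycles d) * (1 - 1 / p i : ℝ))) := by
        gcongr with i
        simpa only [Nat.card_eq_fintype_card] using rootCount_le_pow_mul_rpow_card_cycles (hp i) d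
    _ = (8 ^ Fintype.card ι) ^ Fintype.card β *
          ((Fintype.card β : ℝ) ^ (Nat.card (Cycles d) * δ) *
            (Fintype.card β : ℝ) ^ Nat.card (Cycles d)) := by
        rw [Finset.prod_mul_distrib, ← Real.rpow_sum_of_pos hk0, ← Finset.mul_sum, hsum,
          Finset.prod_const, Finset.card_univ, pow_right_comm, ← Real.rpow_add_natCast hk0.ne',
          mul_one_add, add_comm]
    _ ≤ (8 ^ Fintype.card ι) ^ Fintype.card β *
          ((Fintype.card β : ℝ) ^ (Fintype.card β * (δ / 2)) *
            (Fintype.card β : ℝ) ^ Nat.card (Cycles d)) := by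
        gcongr ?_ * (?_ * ?_)
        exact Real.rpow_le_rpow_of_exponent_le hk1 (by nlinarith)
    _ = _ := (mul_assoc _ _ _).symm

theorem sum_derangements_prod_rootCount_le [Fintype β] [DecidableEq β] [Nonempty β]
    (hp : ∀ i, p i ≠ 0) (hδ : 0 ≤ δ) (hsum : ∑ i, (1 - 1 / p i : ℝ) = 1 + δ) :
    ∑ d : derangements β, ∏ i, (rootCount (p i) d.1 : ℝ) ≤
      (Fintype.card β)! * (4 * 8 ^ Fintype.card ι) ^ Fintype.card β *
        (Fintype.card β : ℝ) ^ (Fintype.card β * (δ / 2)) := by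
  set A : ℝ := (8 ^ Fintype.card ι) ^ Fintype.card β *
    (Fintype.card β : ℝ) ^ (Fintype.card β * (δ / 2)) with hA
  calc ∑ d : derangements β, ∏ i, (rootCount (p i) d.1 : ℝ)
      ≤ ∑ d : derangements β, A * (Fintype.card β : ℝ) ^ Nat.card (Cycles d.1) :=
        sum_le_sum fun d _ => prod_rootCount_le_of_mem_derangements hp hδ hsum d.2
    _ ≤ ∑ d : Perm β, A * (Fintype.card β : ℝ) ^ Nat.card (Cycles d) := by
        rw [Finset.sum_set_coe (derangements β)
          (f := fun d => A * (Fintype.card β : ℝ) ^ Nat.card (Cycles d))]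
        exact Finset.sum_le_univ_sum_of_nonneg fun d => by positivity
    _ ≤ A * ((Fintype.card β)! * 4 ^ Fintype.card β) := by
        rw [← Finset.mul_sum]
        gcongr
        exact_mod_cast sum_card_pow_card_cycles_le β
    _ = _ := by rw [hA, mul_pow]; ring

end DerangementSum

section Decay

variable {ι : Type*} [Fintype ι] {p : ι → ℕ} {δ : ℝ} {α : Type*} [Fintype α]

theorem rootCount_one_compl_mul_descFactorial_rpow_le {p : ℕ} (hp : p ≠ 0) (s : Finset α) :
    (rootCount p (1 : Perm {a // a ∉ s}) : ℝ) *
        ((Fintype.card α).descFactorial #s : ℝ) ^ (1 - 1 / p : ℝ) ≤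
      (p + 2) ^ #s * rootCount p (1 : Perm α) := by
  classical
  have hcard : Fintype.card α - #s + #s = Fintype.card α := Nat.sub_add_cancel s.card_le_univ
  have hcompl : Fintype.card {a // a ∉ s} = Fintype.card α - #s := by
    simp [Fintype.card_subtype_compl]
  rw [rootCount_one_congr (Fintype.equivFinOfCardEq hcompl),
    rootCount_one_congr (Fintype.equivFinOfCardEq hcard.symm)]
  simpa only [hcard] using rootCount_one_mul_descFactorial_rpow_le hp (Fintype.card α - #s) #s

theorem prod_rootCount_one_compl_mul_le (hp : ∀ i, p i ≠ 0)
    (hsum : ∑ i, (1 - 1 / p i : ℝ) = 1 + δ) (s : Finset α) :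
    (∏ i, (rootCount (p i) (1 : Perm {a // a ∉ s}) : ℝ)) *
        ((Fintype.card α).descFactorial #s * ((Fintype.card α).descFactorial #s : ℝ) ^ δ) ≤
      (∏ i, (p i + 2 : ℝ)) ^ #s * ∏ i, (rootCount (p i) (1 : Perm α) : ℝ) := by
  have hpos : (0 : ℝ) < (Fintype.card α).descFactorial #s :=
    Nat.cast_pos.mpr (Nat.descFactorial_pos.mpr s.card_le_univ)
  have hpow : ((Fintype.card α).descFactorial #s : ℝ) *
      ((Fintype.card α).descFactorial #s : ℝ) ^ δ =
        ∏ i, ((Fintype.card α).descFactorial #s : ℝ) ^ (1 - 1 / p i : ℝ) := by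
    rw [← Real.rpow_sum_of_pos hpos, hsum, Real.rpow_add hpos, Real.rpow_one]
  rw [hpow, ← Finset.prod_mul_distrib, ← Finset.prod_pow, ← Finset.prod_mul_distrib]
  exact Finset.prod_le_prod (fun i _ => by positivity) fun i _ =>
    rootCount_one_compl_mul_descFactorial_rpow_le (hp i) s

theorem pow_le_exp_mul_descFactorial {n k : ℕ} (hkn : k ≤ n) :
    (n : ℝ) ^ k ≤ Real.exp k * n.descFactorial k := by
  have hfactor (i : ℕ) (hi : i ∈ range k) : (n : ℝ) * (k - i : ℕ) ≤ k * (n - i : ℕ) := by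
    have hik := mem_range.mp hi
    rw [Nat.cast_sub hik.le, Nat.cast_sub (hik.le.trans hkn)]
    nlinarith [(Nat.cast_le (α := ℝ)).mpr hkn, (Nat.cast_nonneg i : (0 : ℝ) ≤ i)]
  have hprod : (n : ℝ) ^ k * k ! ≤ k ^ k * n.descFactorial k := by
    rw [← Nat.descFactorial_self, Nat.descFactorial_eq_prod_range,
      Nat.descFactorial_eq_prod_range, Nat.cast_prod, Nat.cast_prod]
    simpa only [Finset.prod_mul_distrib, Finset.prod_const, card_range] using
      Finset.prod_le_prod (fun i _ => by positivity) hfactor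
  calc (n : ℝ) ^ k ≤ k ^ k / k ! * n.descFactorial k := by
        rwa [div_mul_eq_mul_div, le_div_iff₀ (by positivity)]
    _ ≤ Real.exp k * n.descFactorial k := by
        gcongr
        exact Real.pow_div_factorial_le_exp k (by positivity) k

theorem rpow_half_le_mul_descFactorial_rpow (hδ : 0 ≤ δ) {n k : ℕ} (hk : 0 < k) (hkn : k ≤ n) :
    (k : ℝ) ^ (k * (δ / 2)) ≤
      (Real.exp δ * (n : ℝ) ^ (-(δ / 2))) ^ k * (n.descFactorial k : ℝ) ^ δ := by
  have hn : (0 : ℝ) < n := Nat.cast_pos.mpr (hk.trans_le hkn)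
  calc (k : ℝ) ^ (k * (δ / 2)) ≤ (n : ℝ) ^ (k * (δ / 2)) := by gcongr
    _ = ((n : ℝ) ^ (-(δ / 2))) ^ k * ((n : ℝ) ^ k) ^ δ := by
        rw [← Real.rpow_mul_natCast hn.le, ← Real.rpow_natCast_mul hn.le, ← Real.rpow_add hn]
        ring_nf
    _ ≤ ((n : ℝ) ^ (-(δ / 2))) ^ k * (Real.exp k * n.descFactorial k) ^ δ := by
        gcongr
        exact pow_le_exp_mul_descFactorial hkn
    _ = (Real.exp δ * (n : ℝ) ^ (-(δ / 2))) ^ k * (n.descFactorial k : ℝ) ^ δ := by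
        rw [Real.mul_rpow (Real.exp_nonneg _) (by positivity), ← Real.exp_mul, Real.exp_nat_mul,
          mul_pow]
        ring

/-- The ratio of the geometric series that bounds, relative to the tuples of `p i`-th roots of the
identity of `Perm (Fin n)`, the tuples of `p i`-th roots of the permutations moving `1, 2, …`
points. Here `δ = ∑ i, (1 - 1 / p i) - 1`. -/
noncomputable def decayRatio (p : ι → ℕ) (δ : ℝ) (n : ℕ) : ℝ :=
  (∏ i, (p i + 2 : ℝ)) * (4 * 8 ^ Fintype.card ι) * (Real.exp δ * (n : ℝ) ^ (-(δ / 2)))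

theorem decayRatio_nonneg (p : ι → ℕ) (δ : ℝ) (n : ℕ) : 0 ≤ decayRatio p δ n := by
  unfold decayRatio
  positivity

theorem tendsto_decayRatio (p : ι → ℕ) (hδ : 0 < δ) : Tendsto (decayRatio p δ) atTop (𝓝 0) := by
  have hpow : Tendsto (fun n : ℕ => (n : ℝ) ^ (-(δ / 2))) atTop (𝓝 0) :=
    (tendsto_rpow_neg_atTop (half_pos hδ)).comp tendsto_natCast_atTop_atTop
  unfold decayRatio
  simpa only [mul_zero] using
    (hpow.const_mul (Real.exp δ)).const_mul ((∏ i, (p i + 2 : ℝ)) * (4 * 8 ^ Fintype.card ι))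

theorem sum_derangements_prod_rootCount_ofSubtype_le [DecidableEq α] (hp : ∀ i, p i ≠ 0)
    (hδ : 0 ≤ δ) (hsum : ∑ i, (1 - 1 / p i : ℝ) = 1 + δ) {s : Finset α} (hs : s.Nonempty) :
    ∑ d : derangements s, ∏ i, (rootCount (p i) (ofSubtype d.1) : ℝ) ≤
      (∏ i, (rootCount (p i) (1 : Perm α) : ℝ)) *
        (decayRatio p δ (Fintype.card α) ^ #s / (Fintype.card α).choose #s) := by
  have := hs.to_subtype
  set n := Fintype.card α
  set k := #s with hk
  set R : ℝ := ∏ i, (rootCount (p i) (1 : Perm {a // a ∉ s}) : ℝ)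
  set D : ℝ := (n.descFactorial k : ℝ) with hD
  set C : ℝ := Real.exp δ * (n : ℝ) ^ (-(δ / 2)) with hC
  have hkn : k ≤ n := s.card_le_univ
  have hchoose : (0 : ℝ) < n.choose k := Nat.cast_pos.mpr (Nat.choose_pos hkn)
  have hfactorial : (k ! : ℝ) * n.choose k = D := by
    rw [hD, Nat.descFactorial_eq_factorial_mul_choose, Nat.cast_mul]
  rw [← mul_div_assoc, le_div_iff₀ hchoose]
  calc (∑ d : derangements s, ∏ i, (rootCount (p i) (ofSubtype d.1) : ℝ)) * n.choose k
      ≤ (R * ∑ d : derangements s, ∏ i, (rootCount (p i) d.1 : ℝ)) * n.choose k := by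
        rw [Finset.mul_sum]
        gcongr with d
        rw [← Finset.prod_mul_distrib]
        gcongr with i
        exact_mod_cast rootCount_ofSubtype_le (p i) d.2
    _ ≤ (R * (k ! * (4 * 8 ^ Fintype.card ι) ^ k * (k : ℝ) ^ (k * (δ / 2)))) * n.choose k := by
        gcongr
        simpa only [Fintype.card_coe, ← hk] using
          sum_derangements_prod_rootCount_le (β := s) hp hδ hsum
    _ = R * D * ((4 * 8 ^ Fintype.card ι) ^ k * (k : ℝ) ^ (k * (δ / 2))) := by
        rw [← hfactorial]
        ring
    _ ≤ R * D * ((4 * 8 ^ Fintype.card ι) ^ k * (C ^ k * D ^ δ)) := by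
        gcongr
        exact rpow_half_le_mul_descFactorial_rpow hδ hs.card_pos hkn
    _ = R * (D * D ^ δ) * ((4 * 8 ^ Fintype.card ι) ^ k * C ^ k) := by ring
    _ ≤ (∏ i, (p i + 2 : ℝ)) ^ k * (∏ i, (rootCount (p i) (1 : Perm α) : ℝ)) *
          ((4 * 8 ^ Fintype.card ι) ^ k * C ^ k) := by
        gcongr ?_ * _
        exact prod_rootCount_one_compl_mul_le hp hsum s
    _ = (∏ i, (rootCount (p i) (1 : Perm α) : ℝ)) * decayRatio p δ n ^ k := by
        rw [decayRatio, ← hC, mul_pow, mul_pow]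
        ring

theorem sum_nonempty_div_choose (f : ℕ → ℝ) :
    ∑ s : Finset α with s.Nonempty, f #s / (Fintype.card α).choose #s =
      ∑ k ∈ range (Fintype.card α), f (k + 1) := by
  classical
  set g : ℕ → ℝ := fun k => if k = 0 then 0 else f k / (Fintype.card α).choose k with hg
  calc ∑ s : Finset α with s.Nonempty, f #s / (Fintype.card α).choose #s
      = ∑ s ∈ (univ : Finset α).powerset, g #s := by
        rw [Finset.sum_filter, Finset.powerset_univ]
        refine Finset.sum_congr rfl fun s _ => ?_
        simp only [hg, Finset.card_eq_zero, Finset.nonempty_iff_ne_empty, ite_not]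
    _ = ∑ k ∈ range (Fintype.card α), f (k + 1) := by
        rw [Finset.sum_powerset_apply_card, Finset.card_univ, Finset.sum_range_succ']
        simp only [hg, nsmul_eq_mul, Nat.succ_ne_zero, if_false, if_true, mul_zero, add_zero]
        refine Finset.sum_congr rfl fun k hk => mul_div_cancel₀ _ ?_
        exact Nat.cast_ne_zero.mpr (Nat.choose_pos (mem_range.mp hk)).ne'

theorem sum_ne_one_prod_rootCount_le [DecidableEq α] (hp : ∀ i, p i ≠ 0) (hδ : 0 ≤ δ)
    (hsum : ∑ i, (1 - 1 / p i : ℝ) = 1 + δ) (hρ : decayRatio p δ (Fintype.card α) ≤ 1 / 2) :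
    ∑ c : Perm α with c ≠ 1, ∏ i, (rootCount (p i) c : ℝ) ≤
      (∏ i, (rootCount (p i) (1 : Perm α) : ℝ)) * (2 * decayRatio p δ (Fintype.card α)) := by
  have hρ0 := decayRatio_nonneg p δ (Fintype.card α)
  set ρ := decayRatio p δ (Fintype.card α)
  have hgeom : ∑ k ∈ range (Fintype.card α), ρ ^ k ≤ 2 :=
    calc ∑ k ∈ range (Fintype.card α), ρ ^ k
        ≤ ∑ k ∈ range (Fintype.card α), (1 / 2 : ℝ) ^ k := by gcongr
      _ ≤ 2 := sum_geometric_two_le _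
  calc ∑ c : Perm α with c ≠ 1, ∏ i, (rootCount (p i) c : ℝ)
      ≤ ∑ s : Finset α with s.Nonempty,
          (∏ i, (rootCount (p i) (1 : Perm α) : ℝ)) * (ρ ^ #s / (Fintype.card α).choose #s) := by
        rw [sum_ne_one_eq_sum_derangements]
        exact sum_le_sum fun s hs => sum_derangements_prod_rootCount_ofSubtype_le hp hδ hsum
          ((mem_filter_univ s).mp hs)
    _ = (∏ i, (rootCount (p i) (1 : Perm α) : ℝ)) *
          ((∑ k ∈ range (Fintype.card α), ρ ^ k) * ρ) := by
        rw [← Finset.mul_sum, sum_nonempty_div_choose (ρ ^ ·), Finset.sum_mul]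
        simp only [pow_succ]
    _ ≤ (∏ i, (rootCount (p i) (1 : Perm α) : ℝ)) * (2 * ρ) := by
        gcongr

theorem tendsto_sum_ne_one_prod_rootCount_div (hp : ∀ i, p i ≠ 0)
    (hsum : 1 < ∑ i, (1 - 1 / p i : ℝ)) :
    Tendsto (fun n : ℕ => (∑ c : Perm (Fin n) with c ≠ 1, ∏ i, (rootCount (p i) c : ℝ)) /
      ∏ i, (rootCount (p i) (1 : Perm (Fin n)) : ℝ)) atTop (𝓝 0) := by
  obtain ⟨δ, hsumδ⟩ : ∃ δ, ∑ i, (1 - 1 / p i : ℝ) = 1 + δ := ⟨_, (add_sub_cancel _ _).symm⟩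
  have hδ : 0 < δ := by linarith
  have hρ : Tendsto (decayRatio p δ) atTop (𝓝 0) := tendsto_decayRatio p hδ
  refine squeeze_zero' (Eventually.of_forall fun n => by positivity) ?_
    (by simpa only [mul_zero] using hρ.const_mul 2)
  filter_upwards [hρ.eventually_le_const (by norm_num : (0 : ℝ) < 1 / 2)] with n hn
  refine div_le_of_le_mul₀ (by positivity) (mul_nonneg zero_le_two (decayRatio_nonneg p δ n)) ?_
  rw [mul_comm]
  simpa only [Fintype.card_fin] using sum_ne_one_prod_rootCount_le (α := Fin n) hp hδ.le hsumδ
    (by rwa [Fintype.card_fin])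

end Decay

section Homs

variable {m : ℕ} {p : Fin m → ℕ} {H : Type*} [Group H]

theorem torusKnotGroup_gen_pow (i j : Fin m) :
    (PresentedGroup.of i : TorusKnotGroup m p) ^ p i = PresentedGroup.of j ^ p j := by
  have hrel : PresentedGroup.mk (torusRels m p)
      (FreeGroup.of i ^ p i * (FreeGroup.of j ^ p j)⁻¹) = 1 :=
    PresentedGroup.one_of_mem ⟨i, j, rfl⟩
  rwa [map_mul, map_inv, map_pow, map_pow, mul_inv_eq_one] at hrel

theorem PhiMap_of (i : Fin m) :
    PhiMap m p (PresentedGroup.of i) = PresentedGroup.of i :=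
  PresentedGroup.toGroup.of _

theorem ker_PhiMap_le_ker_iff (ρ : TorusKnotGroup m p →* H) :
    (PhiMap m p).ker ≤ ρ.ker ↔ ∀ i, ρ (PresentedGroup.of i) ^ p i = 1 := by
  refine ⟨fun hker i => ?_, fun hρ g hg => ?_⟩
  · rw [← map_pow]
    refine hker ?_
    rw [MonoidHom.mem_ker, map_pow, PhiMap_of, cyclicFreeProduct_gen_pow]
  · have hrel : ∀ w ∈ cyclicRels m p,
        FreeGroup.lift (fun i => ρ (PresentedGroup.of i)) w = 1 := by
      rintro _ ⟨i, rfl⟩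
      simpa using hρ i
    have hfactor : ρ = (PresentedGroup.toGroup hrel).comp (PhiMap m p) :=
      PresentedGroup.ext fun i => by
        rw [MonoidHom.comp_apply, PhiMap_of, PresentedGroup.toGroup.of]
    rw [MonoidHom.mem_ker] at hg ⊢
    rw [hfactor, MonoidHom.comp_apply, hg, map_one]

theorem card_torusKnotGroup_hom_gen_pow_eq (c : H) :
    Nat.card {ρ : TorusKnotGroup m p →* H // ∀ i, ρ (PresentedGroup.of i) ^ p i = c} =
      ∏ i, rootCount (p i) c := by
  simp only [rootCount, ← Nat.card_pi]
  have hrel (x : ∀ i, {x : H // x ^ p i = c}) :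
      ∀ w ∈ torusRels m p, FreeGroup.lift (fun i => (x i).1) w = 1 := by
    rintro _ ⟨i, j, rfl⟩
    simp [(x i).2, (x j).2]
  exact Nat.card_congr
    { toFun ρ i := ⟨ρ.1 (PresentedGroup.of i), ρ.2 i⟩
      invFun x := ⟨PresentedGroup.toGroup (hrel x), fun i => by
        rw [PresentedGroup.toGroup.of, (x i).2]⟩
      left_inv _ := Subtype.ext (PresentedGroup.ext fun _ => PresentedGroup.toGroup.of (hrel _))
      right_inv x := funext fun _ => Subtype.ext (PresentedGroup.toGroup.of (hrel x)) }

theorem card_torusKnotGroup_hom_ker_le :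
    Nat.card {ρ : TorusKnotGroup m p →* H // (PhiMap m p).ker ≤ ρ.ker} =
      ∏ i, rootCount (p i) (1 : H) := by
  simp only [ker_PhiMap_le_ker_iff, card_torusKnotGroup_hom_gen_pow_eq]

theorem card_torusKnotGroup_hom [NeZero m] [Fintype H] :
    Nat.card (TorusKnotGroup m p →* H) = ∑ c : H, ∏ i, rootCount (p i) c := by
  have : Finite (TorusKnotGroup m p →* H) :=
    Finite.of_injective (fun ρ i => ρ (PresentedGroup.of i)) fun _ _ h =>
      PresentedGroup.ext (congrFun h)
  have hfiber (ρ : TorusKnotGroup m p →* H) (c : H) :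
      ρ (PresentedGroup.of 0) ^ p 0 = c ↔ ∀ i, ρ (PresentedGroup.of i) ^ p i = c := by
    refine ⟨fun h i => ?_, fun h => h 0⟩
    rw [← h, ← map_pow, ← map_pow, torusKnotGroup_gen_pow i 0]
  rw [← Nat.card_congr (Equiv.sigmaFiberEquiv fun ρ : TorusKnotGroup m p →* H =>
    ρ (PresentedGroup.of 0) ^ p 0), Nat.card_sigma]
  simp only [hfiber, card_torusKnotGroup_hom_gen_pow_eq]

end Homs

theorem homs_factor_through_Phi (m : ℕ) (p : Fin m → ℕ) (hp : ∀ i, 2 ≤ p i)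
    (h : ∑ i, (1 : ℝ) / (p i : ℝ) < (m : ℝ) - 1) :
    Filter.Tendsto (fun n : ℕ =>
      (Nat.card {ρ : TorusKnotGroup m p →* Equiv.Perm (Fin n) //
          (PhiMap m p).ker ≤ ρ.ker} : ℝ) /
        (Nat.card (TorusKnotGroup m p →* Equiv.Perm (Fin n)) : ℝ))
      Filter.atTop (𝓝 1) := by
  have : NeZero m := ⟨by
    rintro rfl
    norm_num at h⟩
  have hsum : 1 < ∑ i, (1 - 1 / p i : ℝ) := by
    simp only [Finset.sum_sub_distrib, Finset.sum_const, card_univ, Fintype.card_fin, nsmul_one]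
    linarith
  have hlim := tendsto_sum_ne_one_prod_rootCount_div
    (fun i => (zero_lt_two.trans_le (hp i)).ne') hsum
  have hinv := (hlim.const_add 1).inv₀ (by norm_num)
  rw [add_zero, inv_one] at hinv
  refine hinv.congr fun n => ?_
  have hpos : (0 : ℝ) < ∏ i, (rootCount (p i) (1 : Perm (Fin n)) : ℝ) :=
    Finset.prod_pos fun i _ => Nat.cast_pos.mpr (rootCount_one_pos (p i))
  rw [card_torusKnotGroup_hom_ker_le, card_torusKnotGroup_hom]
  push_cast
  rw [← Finset.add_sum_erase univ _ (mem_univ (1 : Perm (Fin n))), ← Finset.filter_ne',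
    one_add_div hpos.ne', inv_div]
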